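/- arXiv:1506.04215 — 3 statements merged into one kernel-verified Lean document; each statement's English description precedes it below -/
import Mathlib

section
/- Let R be a commutative ring and f ∈ R[z] a polynomial whose nonzero coefficients are pairwise distinct, i.e., the map E ↦ coeff_E(f) is injective on supp(f). Let p ≥ 1 and p′ ≥ 1 be such that the exponents in supp(f) are pairwise incongruent modulo p and pairwise incongruent modulo p′. Suppose c ≠ 0, the reduction of f modulo z^p − 1 has coefficient c at exponent j, and the reduction of f modulo z^{p′} − 1 has coefficient c at exponent j′. Then there is a unique E ∈ supp(f) with coeff_E(f) = c, and it satisfies j = E mod p and j′ = E mod p′. -/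
/-!
Modulo `X ^ p - 1` each term `a X ^ E` of `f` becomes `a X ^ (E % p)`. Since `X ^ p - 1` is monic of
degree `p`, the reduction of `f` is exactly the sum of these folded terms. When the exponents of
`f` are incongruent modulo `p`, at most one term lands on each exponent, so every nonzero
coefficient of the reduction is the coefficient of a single term of `f`
(`exists_mem_support_of_coeff_reduction`). Injectivity of the coefficients on the support then
forces the terms found for `p` and for `p'` to coincide.
-/

open Polynomial in
theorem X_pow_sub_one_dvd_monomial_sub {R : Type*} [CommRing R] (p E : ℕ) (a : R) :
    (X ^ p - 1 : R[X]) ∣ monomial E a - monomial (E % p) a := by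
  have h : monomial E a - monomial (E % p) a
      = C a * X ^ (E % p) * ((X ^ p) ^ (E / p) - 1 : R[X]) := by
    rw [mul_sub, mul_one, ← C_mul_X_pow_eq_monomial, ← C_mul_X_pow_eq_monomial, ← pow_mul,
      mul_assoc, ← pow_add, Nat.mod_add_div]
  rw [h]
  exact (sub_one_dvd_pow_sub_one _ _).mul_left _

open Polynomial in
/-- The reduction of `f` modulo `X ^ p - 1` is `f` with every exponent reduced modulo `p`. -/
theorem reduction_eq_sum_monomial_mod {R : Type*} [CommRing R] [Nontrivial R] (f : R[X])
    (p : ℕ) (hp : 1 ≤ p) (r : R[X]) (hrdeg : r.degree < (p : ℕ))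
    (hrdvd : (X ^ p - 1) ∣ (f - r)) :
    r = ∑ E ∈ f.support, monomial (E % p) (f.coeff E) := by
  set g : R[X] := ∑ E ∈ f.support, monomial (E % p) (f.coeff E) with hg
  have hfg : (X ^ p - 1 : R[X]) ∣ f - g := by
    have h : f - g = ∑ E ∈ f.support,
        (monomial E (f.coeff E) - monomial (E % p) (f.coeff E)) := by
      rw [Finset.sum_sub_distrib, ← hg, ← f.as_sum_support]
    rw [h]
    exact Finset.dvd_sum fun E _ => X_pow_sub_one_dvd_monomial_sub p E _
  have hgdeg : g.degree < (p : ℕ) := by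
    rw [hg, ← mem_degreeLT]
    refine Submodule.sum_mem _ fun E _ => ?_
    rw [mem_degreeLT]
    exact (degree_monomial_le _ _).trans_lt (by exact_mod_cast Nat.mod_lt E hp)
  have hdvd : (X ^ p - 1 : R[X]) ∣ r - g := by
    have h := dvd_sub hfg hrdvd
    rwa [sub_sub_sub_cancel_left] at h
  by_contra hne
  have hmonic : (X ^ p - 1 : R[X]).Monic := by
    simpa using monic_X_pow_sub_C (1 : R) (by omega : p ≠ 0)
  have hdeg : (X ^ p - 1 : R[X]).degree = (p : ℕ) := by
    simpa using degree_X_pow_sub_C hp (1 : R)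
  refine hmonic.not_dvd_of_degree_lt (sub_ne_zero.mpr hne) ?_ hdvd
  rw [hdeg]
  exact (degree_sub_le _ _).trans_lt (max_lt hrdeg hgdeg)

open Polynomial in
/-- Without collisions modulo `p`, each nonzero coefficient of the reduction of `f` is the image
of a term of `f`. -/
theorem exists_mem_support_of_coeff_reduction {R : Type*} [CommRing R] (f : R[X])
    (p : ℕ) (hp : 1 ≤ p)
    (hcol : ∀ E ∈ f.support, ∀ E' ∈ f.support, E % p = E' % p → E = E')
    (c : R) (hc : c ≠ 0) (j : ℕ) (r : R[X]) (hrdeg : r.degree < (p : ℕ))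
    (hrdvd : (X ^ p - 1) ∣ (f - r)) (hj : r.coeff j = c) :
    ∃ E ∈ f.support, f.coeff E = c ∧ j = E % p := by
  have : Nontrivial R := ⟨c, 0, hc⟩
  rw [reduction_eq_sum_monomial_mod f p hp r hrdeg hrdvd, finsetSum_coeff] at hj
  obtain ⟨E, hE, hne⟩ := Finset.exists_ne_zero_of_sum_ne_zero (hj ▸ hc)
  have hEj : E % p = j := by
    by_contra h
    exact hne (coeff_monomial_of_ne _ (Ne.symm h))
  refine ⟨E, hE, ?_, hEj.symm⟩
  rw [Finset.sum_eq_single_of_mem E hE, ← hEj, coeff_monomial_same] at hj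
  · exact hj
  · intro E' hE' hEE'
    exact coeff_monomial_of_ne _ fun h => hEE' (hcol E' hE' E hE (by omega))

/-- For a diversified polynomial `f` and collision-free primes `p, p'`, a common nonzero
coefficient `c` appearing at exponent `j` in the reduction of `f` mod `z^p − 1` and at
exponent `j'` in the reduction mod `z^{p'} − 1` comes from a unique exponent `E` of `f`
with `coeff_E f = c`, and `j = E mod p`, `j' = E mod p'`. -/
theorem diversified_coefficient_correlates {R : Type*} [CommRing R]
    (f : Polynomial R) (hdiv : Set.InjOn f.coeff ↑f.support)
    (p p' : ℕ) (hp : 1 ≤ p) (hp' : 1 ≤ p')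
    (hcolp : ∀ E ∈ f.support, ∀ E' ∈ f.support, E % p = E' % p → E = E')
    (hcolp' : ∀ E ∈ f.support, ∀ E' ∈ f.support, E % p' = E' % p' → E = E')
    (c : R) (hc : c ≠ 0) (j j' : ℕ)
    (r : Polynomial R) (hrdeg : r.degree < (p : ℕ))
    (hrdvd : (Polynomial.X ^ p - 1) ∣ (f - r))
    (r' : Polynomial R) (hr'deg : r'.degree < (p' : ℕ))
    (hr'dvd : (Polynomial.X ^ p' - 1) ∣ (f - r'))
    (hj : r.coeff j = c) (hj' : r'.coeff j' = c) :
    ∃ E ∈ f.support, f.coeff E = c ∧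
      (∀ E'' ∈ f.support, f.coeff E'' = c → E'' = E) ∧
      j = E % p ∧ j' = E % p' := by
  obtain ⟨E, hE, hEc, hEj⟩ :=
    exists_mem_support_of_coeff_reduction f p hp hcolp c hc j r hrdeg hrdvd hj
  obtain ⟨E', hE', hEc', hEj'⟩ :=
    exists_mem_support_of_coeff_reduction f p' hp' hcolp' c hc j' r' hr'deg hr'dvd hj'
  have huniq : ∀ E'' ∈ f.support, f.coeff E'' = c → E'' = E := fun E'' h h' =>
    hdiv h hE (h'.trans hEc.symm)
  exact ⟨E, hE, hEc, huniq, hEj, huniq E' hE' hEc' ▸ hEj'⟩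
end

section
/- Let n ≥ 1 and D ≥ 2, let R be a commutative ring, α ∈ R, and let f be a multivariate polynomial over R in n variables all of whose monomials have each partial exponent less than D. Let g ∈ R[z] be the image of f under the substitution x_i ↦ (αz)^(D^i) for 0 ≤ i < n. Then g = Σ_{e ∈ supp(f)} c_e · α^{E(e)} · z^{E(e)}, where c_e is the coefficient of the monomial e in f and E(e) = Σ_{i<n} e_i·D^i is the Kronecker exponent of e; in particular, for every tuple e with each e_i < D, the coefficient of z^{E(e)} in g equals α^{E(e)} times the coefficient of the monomial e in f. -/
/-!
The Kronecker exponent `E(e) = ∑ i, e i * D ^ i` reads `e` as a list of base-`D` digits. Expanding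
the substitution monomial by monomial, the factors `(αz)^(D^i * e i)` multiply to `(αz)^E(e)`, which
gives the formula for `g`. For the coefficients, uniqueness of
base-`D` digits (`kroneckerExponent_injOn`) shows that distinct exponent tuples with all entries
below `D` have distinct Kronecker exponents, so only the term of `e` itself contributes to the
coefficient of `z^E(e)`.
-/

/-- The base-`D` expansion with `n` digits is unique; this is the injectivity of
`finFunctionFinEquiv : (Fin n → Fin D) ≃ Fin (D ^ n)`. -/
theorem kroneckerExponent_injOn {n D : ℕ} {a b : Fin n →₀ ℕ}
    (ha : ∀ i, a i < D) (hb : ∀ i, b i < D)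
    (h : ∑ i, a i * D ^ (i : ℕ) = ∑ i, b i * D ^ (i : ℕ)) : a = b := by
  have key : (fun i => (⟨a i, ha i⟩ : Fin D)) = fun i => ⟨b i, hb i⟩ := by
    apply finFunctionFinEquiv.injective
    apply Fin.ext
    simpa only [finFunctionFinEquiv_apply] using h
  ext i
  exact congrArg Fin.val (congrFun key i)

/-- Diversified Kronecker substitution `x_i ↦ (αz)^(D^i)`: each term `c·x^e` of `f`
maps to the term `c·α^{E(e)}·z^{E(e)}` where `E(e) = ∑_{i<n} e_i·D^i`, and the
coefficient of `z^{E(e)}` in the result is `α^{E(e)}` times the coefficient of `e` in `f`. -/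
theorem diversified_kronecker_substitution {R : Type*} [CommRing R]
    (n D : ℕ) (hn : 1 ≤ n) (hD : 2 ≤ D)
    (α : R) (f : MvPolynomial (Fin n) R)
    (hf : ∀ m ∈ f.support, ∀ i, m i < D)
    (g : Polynomial R)
    (hg : g = MvPolynomial.aeval
        (fun i : Fin n => (Polynomial.C α * Polynomial.X) ^ D ^ (i : ℕ)) f) :
    g = ∑ e ∈ f.support,
        Polynomial.C (MvPolynomial.coeff e f * α ^ (∑ i, e i * D ^ (i : ℕ)))
          * Polynomial.X ^ (∑ i, e i * D ^ (i : ℕ)) ∧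
    ∀ e : Fin n →₀ ℕ, (∀ i, e i < D) →
      g.coeff (∑ i, e i * D ^ (i : ℕ))
        = α ^ (∑ i, e i * D ^ (i : ℕ)) * MvPolynomial.coeff e f := by
  have hsum : g = ∑ e ∈ f.support,
      Polynomial.C (MvPolynomial.coeff e f * α ^ (∑ i, e i * D ^ (i : ℕ)))
        * Polynomial.X ^ (∑ i, e i * D ^ (i : ℕ)) := by
    rw [hg, MvPolynomial.aeval_def, MvPolynomial.eval₂_eq']
    refine Finset.sum_congr rfl fun e _ => ?_
    have hprod : ∏ i : Fin n, ((Polynomial.C α * Polynomial.X) ^ D ^ (i : ℕ)) ^ e i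
        = (Polynomial.C α * Polynomial.X) ^ (∑ i, e i * D ^ (i : ℕ)) := by
      rw [← Finset.prod_pow_eq_pow_sum]
      exact Finset.prod_congr rfl fun i _ => by rw [← pow_mul, mul_comm (e i)]
    rw [hprod, mul_pow, Polynomial.algebraMap_eq, Polynomial.C_mul, Polynomial.C_pow, mul_assoc]
  refine ⟨hsum, fun e he => ?_⟩
  rw [hsum, Polynomial.finsetSum_coeff]
  simp only [Polynomial.coeff_C_mul_X_pow]
  rw [Finset.sum_eq_single e]
  · rw [if_pos rfl, mul_comm]
  · intro b hb hbe
    exact if_neg fun h => hbe (kroneckerExponent_injOn he (hf b hb) h).symm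
  · intro h
    rw [MvPolynomial.notMem_support_iff.mp h, zero_mul, ite_self]
end

section
/- Let R be a commutative ring, n ≥ 1, D ≥ 1, p ≥ 1, and α_0, …, α_{n−1} ∈ R, and let f be a multivariate polynomial over R in n variables. Let d_i = D^i mod p for 0 ≤ i < n. Then f(α_0·z^{d_0}, …, α_{n−1}·z^{d_{n−1}}) ≡ f(α_0·z^{D^0}, …, α_{n−1}·z^{D^{n−1}}) (mod z^p − 1) in R[z]. -/
/-! In the quotient `R[z] / (z^p - 1)` the class of `z` satisfies `z^p = 1`, so `z^k` depends
only on `k % p`. The quotient map is an `R`-algebra map and hence commutes with substitution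
into `f`; the two substituted tuples have equal images, so the two values do as well. -/

/-- Reducing the Kronecker powers `D^i` modulo `p` does not change the substitution
result modulo `z^p − 1`. -/
theorem kronecker_powers_reduce_mod (n D p : ℕ) (hn : 1 ≤ n) (hD : 1 ≤ D) (hp : 1 ≤ p)
    {R : Type*} [CommRing R] (α : Fin n → R) (f : MvPolynomial (Fin n) R) :
    (Polynomial.X ^ p - 1 : Polynomial R) ∣
      (MvPolynomial.aeval
          (fun i : Fin n => Polynomial.C (α i) * Polynomial.X ^ (D ^ (i : ℕ) % p)) f
        - MvPolynomial.aeval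
          (fun i : Fin n => Polynomial.C (α i) * Polynomial.X ^ (D ^ (i : ℕ))) f) := by
  rw [← Ideal.mem_span_singleton, ← Ideal.Quotient.eq]
  set I : Ideal (Polynomial R) := Ideal.span {Polynomial.X ^ p - 1}
  have hX : (Ideal.Quotient.mk I Polynomial.X) ^ p = 1 := by
    rw [← map_pow, ← map_one (Ideal.Quotient.mk I), Ideal.Quotient.eq]
    exact Ideal.mem_span_singleton_self _
  -- `MvPolynomial.comp_aeval` needs the quotient map as an `AlgHom`, not just a `RingHom`.
  change Ideal.Quotient.mkₐ R I _ = Ideal.Quotient.mkₐ R I _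
  simp only [← AlgHom.comp_apply, MvPolynomial.comp_aeval]
  congr 2
  funext i
  simp only [map_mul, map_pow, Ideal.Quotient.mkₐ_eq_mk]
  rw [← pow_eq_pow_mod _ hX]
end
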